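/- arXiv:1810.01034 — 3 statements merged into one kernel-verified Lean document; each statement's English description precedes it below -/
import Mathlib

section
/- Let k be a field with char k ≠ 2, let V be a finite-dimensional k-vector space with a nondegenerate symmetric bilinear form ⟨·,·⟩, and let N be a skew-adjoint nilpotent endomorphism of V. Then for every even integer i ≥ 2, the number of Jordan blocks of N of size i is even; equivalently, dim ker(N^{i−1}) + dim ker(N^{i+1}) is even (the number of Jordan blocks of size i equals 2·dim ker(N^i) − dim ker(N^{i−1}) − dim ker(N^{i+1})). -/
/-!
If `N` is skew-adjoint, `char k ≠ 2` and `n` is odd, then `A x y = ⟨N ^ n x, y⟩` is an alternating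
form with radical `ker (N ^ n)`. For any alternating form `A` on `V`, a maximal totally isotropic
subspace `W` equals its own orthogonal complement, so that
`2 * dim W = dim W + dim W^⊥ = dim V + dim rad A`. Thus `dim ker (N ^ n)` has the parity of `dim V`
for every odd `n`, in particular for `n = i - 1` and `n = i + 1`.
-/

open Module LinearMap

section Isotropic

variable {R M : Type*} [CommRing R] [AddCommGroup M] [Module R M] {A : LinearMap.BilinForm R M}

theorem le_orthogonal_comm (hA : A.IsRefl) {U W : Submodule R M} :
    U ≤ A.orthogonal W ↔ W ≤ A.orthogonal U :=
  ⟨fun h w hw u hu ↦ hA w u (h hu w hw), fun h u hu w hw ↦ hA u w (h hw u hu)⟩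

theorem sup_span_singleton_le_orthogonal (hA : A.IsAlt) {W : Submodule R M}
    (hW : W ≤ A.orthogonal W) {x : M} (hx : x ∈ A.orthogonal W) :
    W ⊔ R ∙ x ≤ A.orthogonal (W ⊔ R ∙ x) := by
  have hspan : R ∙ x ≤ A.orthogonal W := (Submodule.span_singleton_le_iff_mem _ _).2 hx
  have hself : R ∙ x ≤ A.orthogonal (R ∙ x) := by
    rw [Submodule.span_singleton_le_iff_mem]
    intro y hy
    obtain ⟨r, rfl⟩ := Submodule.mem_span_singleton.1 hy
    rw [map_smul₂, hA, smul_zero]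
  exact sup_le ((le_orthogonal_comm hA.isRefl).1 (sup_le hW hspan))
    ((le_orthogonal_comm hA.isRefl).1 (sup_le ((le_orthogonal_comm hA.isRefl).1 hspan) hself))

theorem sSup_le_orthogonal_of_isChain (hA : A.IsRefl) {c : Set (Submodule R M)}
    (hc : ∀ W ∈ c, W ≤ A.orthogonal W) (hchain : IsChain (· ≤ ·) c) :
    sSup c ≤ A.orthogonal (sSup c) := by
  refine sSup_le fun U hU ↦ (le_orthogonal_comm hA).1 (sSup_le fun W hW ↦ ?_)
  rcases hchain.total hU hW with hUW | hWU
  · exact (hc W hW).trans (BilinForm.orthogonal_le hUW)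
  · exact hWU.trans (hc U hU)

theorem exists_orthogonal_eq_self (hA : A.IsAlt) : ∃ W : Submodule R M, A.orthogonal W = W := by
  obtain ⟨W, hW⟩ := zorn_le₀ {W : Submodule R M | W ≤ A.orthogonal W} fun c hc hchain ↦
    ⟨sSup c, sSup_le_orthogonal_of_isChain hA.isRefl hc hchain, fun _ ↦ le_sSup⟩
  refine ⟨W, le_antisymm (fun x hx ↦ ?_) hW.prop⟩
  have hmax : W ⊔ R ∙ x ≤ W :=
    hW.le_of_ge (sup_span_singleton_le_orthogonal hA hW.prop hx) le_sup_left
  exact hmax (Submodule.mem_sup_right (Submodule.mem_span_singleton_self x))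

end Isotropic

theorem isAdjointPair_pow {R M P : Type*} [CommSemiring R] [AddCommMonoid M] [Module R M]
    [AddCommMonoid P] [Module R P] {B : M →ₗ[R] M →ₗ[R] P} {f g : End R M}
    (h : IsAdjointPair B B f g) (n : ℕ) : IsAdjointPair B B ⇑(f ^ n) ⇑(g ^ n) := by
  induction n with
  | zero => exact isAdjointPair_id
  | succ n ih =>
    rw [pow_succ f, pow_succ' g]
    exact ih.mul h

section SkewAdjoint

variable {R M : Type*} [CommRing R] [AddCommGroup M] [Module R M] {B : LinearMap.BilinForm R M}
  {N : End R M}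

theorem isAlt_comp_pow_of_odd (hN : B.IsSkewAdjoint N) (halt : (B ∘ₗ N).IsAlt) {n : ℕ}
    (hn : Odd n) : (B ∘ₗ (N ^ n)).IsAlt := by
  obtain ⟨m, rfl⟩ := hn
  intro x
  have hadj : IsAdjointPair B B ⇑(N ^ m) ⇑((-N) ^ m) := isAdjointPair_pow (g := -N) hN m
  have hpow : (-N) ^ m = (-1 : R) ^ m • N ^ m := by rw [← smul_pow, neg_one_smul]
  calc B ((N ^ (2 * m + 1)) x) x = B ((N ^ m) (N ((N ^ m) x))) x := by
        rw [two_mul, add_assoc, pow_add, pow_succ', End.mul_apply, End.mul_apply]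
    _ = (-1) ^ m * B (N ((N ^ m) x)) ((N ^ m) x) := by
        rw [hadj, hpow, LinearMap.smul_apply, map_smul, smul_eq_mul]
    _ = (-1) ^ m * 0 := congrArg ((-1) ^ m * ·) (halt ((N ^ m) x))
    _ = 0 := mul_zero _

theorem isAlt_comp_of_isSkewAdjoint (h2 : IsLeftRegular (2 : R)) (hB : B.IsSymm)
    (hN : B.IsSkewAdjoint N) : (B ∘ₗ N).IsAlt := by
  intro x
  have hneg : B (N x) x = -B (N x) x :=
    calc B (N x) x = B x (-N x) := hN x x
      _ = -B (N x) x := by rw [map_neg, hB.eq]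
  have hdouble : 2 * B (N x) x = 2 * 0 := by linear_combination hneg
  exact h2 hdouble

end SkewAdjoint

section Parity

variable {k V : Type*} [Field k] [AddCommGroup V] [Module k V] [FiniteDimensional k V]

theorem even_finrank_add_finrank_ker_of_isAlt {A : LinearMap.BilinForm k V} (hA : A.IsAlt) :
    Even (finrank k V + finrank k (ker A)) := by
  obtain ⟨W, hW⟩ := exists_orthogonal_eq_self hA
  have hker : ker A ≤ W := by
    rw [← BilinForm.orthogonal_top_eq_ker hA.isRefl, ← hW]
    exact BilinForm.orthogonal_le le_top
  have hdim := BilinForm.finrank_add_finrank_orthogonal' (B := A) W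
  rw [hW, inf_eq_right.2 hker] at hdim
  exact ⟨finrank k W, hdim.symm⟩

variable {B : LinearMap.BilinForm k V} {N : End k V}

theorem even_finrank_add_finrank_ker_pow_of_odd (hB : B.SeparatingLeft)
    (hN : B.IsSkewAdjoint N) (halt : (B ∘ₗ N).IsAlt) {n : ℕ} (hn : Odd n) :
    Even (finrank k V + finrank k (ker (N ^ n))) := by
  have hker : ker (B ∘ₗ (N ^ n)) = ker (N ^ n) :=
    ker_comp_of_ker_eq_bot _ (separatingLeft_iff_ker_eq_bot.1 hB)
  exact hker ▸ even_finrank_add_finrank_ker_of_isAlt (isAlt_comp_pow_of_odd hN halt hn)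

theorem stmt1_general (hB : B.SeparatingLeft) (hN : B.IsSkewAdjoint N) (halt : (B ∘ₗ N).IsAlt)
    {i : ℕ} (heven : Even i) (hi : 2 ≤ i) :
    Even (2 * finrank k (ker (N ^ i)) - finrank k (ker (N ^ (i - 1)))
        - finrank k (ker (N ^ (i + 1)))) ∧
    Even (finrank k (ker (N ^ (i - 1))) + finrank k (ker (N ^ (i + 1)))) := by
  have hpred : Even (finrank k V + finrank k (ker (N ^ (i - 1)))) :=
    even_finrank_add_finrank_ker_pow_of_odd hB hN halt (Nat.Even.sub_odd (by lia) heven odd_one)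
  have hsucc : Even (finrank k V + finrank k (ker (N ^ (i + 1)))) :=
    even_finrank_add_finrank_ker_pow_of_odd hB hN halt heven.add_one
  have hsum : Even (finrank k (ker (N ^ (i - 1))) + finrank k (ker (N ^ (i + 1)))) := by
    grind
  exact ⟨by simpa only [Nat.sub_sub] using (even_two_mul _).tsub hsum, hsum⟩

end Parity

/-- For a skew-adjoint nilpotent endomorphism of a finite-dimensional vector space with a
nondegenerate symmetric bilinear form (char ≠ 2), every even Jordan block size occurs with
even multiplicity; the multiplicity of size `i` is
`2 * dim ker N^i - dim ker N^(i-1) - dim ker N^(i+1)`, and equivalently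
`dim ker N^(i-1) + dim ker N^(i+1)` is even. -/
theorem stmt1 (k : Type*) [Field k] (hchar : (2 : k) ≠ 0)
    (V : Type*) [AddCommGroup V] [Module k V] [FiniteDimensional k V]
    (B : V →ₗ[k] V →ₗ[k] k)
    (hBnd : ∀ x : V, (∀ y : V, B x y = 0) → x = 0)
    (hsymm : ∀ x y : V, B x y = B y x)
    (N : Module.End k V)
    (hskew : ∀ x y : V, B (N x) y = - B x (N y))
    (hnil : IsNilpotent N)
    (i : ℕ) (heven : Even i) (hi : 2 ≤ i) :
    Even (2 * Module.finrank k ↥(LinearMap.ker (N ^ i))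
        - Module.finrank k ↥(LinearMap.ker (N ^ (i - 1)))
        - Module.finrank k ↥(LinearMap.ker (N ^ (i + 1)))) ∧
    Even (Module.finrank k ↥(LinearMap.ker (N ^ (i - 1)))
        + Module.finrank k ↥(LinearMap.ker (N ^ (i + 1)))) := by
  have hN : B.IsSkewAdjoint N := fun x y ↦ (hskew x y).trans (map_neg (B x) (N y)).symm
  exact stmt1_general hBnd hN
    (isAlt_comp_of_isSkewAdjoint (IsRegular.of_ne_zero hchar).left ⟨hsymm⟩ hN) heven hi
end

section
/- Let k be an algebraically closed field with char k ≠ 2, let V be a k-vector space of dimension n with a nondegenerate symmetric bilinear form ⟨·,·⟩, and let λ = (λ₁ ≥ λ₂ ≥ ⋯) be a partition of n in which every even part occurs with even multiplicity. Then there exists a skew-adjoint nilpotent endomorphism N of V with Jordan type λ, i.e., dim ker(N^t) = ∑_j min(t, λ_j) for all t ≥ 0. -/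
/-!
Over any field, a single Jordan block of odd size `p` is skew-adjoint for the symmetric form
`∑ i, (-1) ^ i * x i * y (p - 1 - i)`, and for an arbitrary nilpotent `N` on `W` the operator
`(-Nᵀ) ⊕ N` on `W* ⊕ W` is skew-adjoint for the hyperbolic form and has every Jordan block of `N`
twice. Orthogonal direct sums of these realise every partition whose even parts have even
multiplicity on some nondegenerate symmetric space. Over an algebraically closed field of
characteristic `≠ 2` the dimension determines such a space up to isometry, so the operator can be
transported to the given one.
-/

section Powers

variable {R M M' : Type*} [AddCommMonoid M] [AddCommMonoid M']

theorem prodMap_pow [Semiring R] [Module R M] [Module R M'] (f : Module.End R M)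
    (g : Module.End R M') (t : ℕ) :
    (f.prodMap g : Module.End R (M × M')) ^ t = (f ^ t).prodMap (g ^ t) :=
  (map_pow (LinearMap.prodMapRingHom R M M') (f, g) t).symm

theorem dualMap_pow [CommSemiring R] [Module R M] (f : Module.End R M) (t : ℕ) :
    (LinearMap.dualMap f : Module.End R (Module.Dual R M)) ^ t = (f ^ t).dualMap := by
  induction t with
  | zero => exact LinearMap.dualMap_id.symm
  | succ t ih =>
    rw [pow_succ, ih, pow_succ', Module.End.mul_eq_comp, Module.End.mul_eq_comp,
      LinearMap.dualMap_comp_dualMap]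

end Powers

section FinrankKer

variable {k V V' W W' : Type*} [Field k] [AddCommGroup V] [Module k V] [AddCommGroup V']
  [Module k V'] [AddCommGroup W] [Module k W] [AddCommGroup W'] [Module k W']
  [FiniteDimensional k V] [FiniteDimensional k W]

theorem finrank_ker_prodMap (f : V →ₗ[k] V') (g : W →ₗ[k] W') :
    Module.finrank k (LinearMap.ker (f.prodMap g)) =
      Module.finrank k (LinearMap.ker f) + Module.finrank k (LinearMap.ker g) := by
  have hrange : LinearMap.range ((LinearMap.ker f).subtype.prodMap (LinearMap.ker g).subtype) =
      LinearMap.ker (f.prodMap g) := by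
    rw [LinearMap.range_prodMap, Submodule.range_subtype, Submodule.range_subtype,
      LinearMap.ker_prodMap]
  rw [← hrange, LinearMap.finrank_range_of_inj
    (Subtype.val_injective.prodMap Subtype.val_injective), Module.finrank_prod]

theorem finrank_ker_dualMap (f : Module.End k V) :
    Module.finrank k (LinearMap.ker f.dualMap) = Module.finrank k (LinearMap.ker f) := by
  have hdual := f.dualMap.finrank_range_add_finrank_ker
  rw [LinearMap.finrank_range_dualMap_eq_finrank_range, Subspace.dual_finrank_eq,
    ← f.finrank_range_add_finrank_ker] at hdual
  exact Nat.add_left_cancel hdual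

end FinrankKer

theorem sum_map_min_eq_sum {s : Multiset ℕ} {t : ℕ} (h : ∀ p ∈ s, p ≤ t) :
    (s.map fun p => min t p).sum = s.sum := by
  rw [Multiset.map_congr rfl fun p hp => min_eq_right (h p hp), Multiset.map_id']

section JordanType

variable {k V W : Type*} [Field k] [AddCommGroup V] [Module k V] [AddCommGroup W] [Module k W]

/-- `HasJordanType N s` says that `N` is nilpotent and that the sizes of its Jordan blocks are the
elements of `s`, expressed through the dimensions of the kernels of the powers of `N`. Zeros in `s`
are allowed and contribute nothing. -/
def HasJordanType (N : Module.End k V) (s : Multiset ℕ) : Prop :=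
  IsNilpotent N ∧
    ∀ t : ℕ, Module.finrank k (LinearMap.ker (N ^ t)) = (s.map fun p => min t p).sum

namespace HasJordanType

variable {N : Module.End k V} {N' : Module.End k W} {s s' : Multiset ℕ}

theorem finrank_eq_sum (h : HasJordanType N s) : Module.finrank k V = s.sum := by
  obtain ⟨⟨m, hm⟩, hker⟩ := h
  have hzero : N ^ (m + s.sum) = 0 := pow_eq_zero_of_le (Nat.le_add_right m _) hm
  have hle : ∀ p ∈ s, p ≤ m + s.sum := fun p hp =>
    (Multiset.le_sum_of_mem hp).trans (Nat.le_add_left _ m)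
  rw [← sum_map_min_eq_sum hle, ← hker, hzero, LinearMap.ker_zero, finrank_top]

theorem of_subsingleton [Subsingleton V] (N : Module.End k V) : HasJordanType N 0 :=
  ⟨⟨1, Subsingleton.elim _ _⟩, fun _ => by simp [Module.finrank_zero_of_subsingleton]⟩

theorem neg (h : HasJordanType N s) : HasJordanType (-N) s := by
  refine ⟨h.1.neg, fun t => ?_⟩
  rw [← h.2 t]
  rcases Nat.even_or_odd t with ht | ht
  · rw [ht.neg_pow]
  · rw [ht.neg_pow, LinearMap.ker_neg]

theorem dualMap [FiniteDimensional k V] (h : HasJordanType N s) :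
    HasJordanType (LinearMap.dualMap N : Module.End k (Module.Dual k V)) s := by
  obtain ⟨⟨m, hm⟩, hker⟩ := h
  refine ⟨⟨m, ?_⟩, fun t => ?_⟩
  · rw [dualMap_pow, hm]
    ext
    simp
  · rw [dualMap_pow, finrank_ker_dualMap, hker]

theorem prodMap [FiniteDimensional k V] [FiniteDimensional k W]
    (h : HasJordanType N s) (h' : HasJordanType N' s') :
    HasJordanType (N.prodMap N' : Module.End k (V × W)) (s + s') := by
  obtain ⟨⟨m, hm⟩, hker⟩ := h
  obtain ⟨⟨m', hm'⟩, hker'⟩ := h'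
  refine ⟨⟨m + m', ?_⟩, fun t => ?_⟩
  · rw [prodMap_pow, pow_eq_zero_of_le (Nat.le_add_right m m') hm,
      pow_eq_zero_of_le (Nat.le_add_left m' m) hm', LinearMap.prodMap_zero]
  · rw [prodMap_pow, finrank_ker_prodMap, hker, hker', Multiset.map_add, Multiset.sum_add]

theorem conj (h : HasJordanType N s) (e : V ≃ₗ[k] W) : HasJordanType (e.conj N) s := by
  have hpow (t : ℕ) : e.conj N ^ t = e.conj (N ^ t) := (map_pow e.conjRingEquiv N t).symm
  obtain ⟨⟨m, hm⟩, hker⟩ := h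
  refine ⟨⟨m, by rw [hpow, hm, map_zero]⟩, fun t => ?_⟩
  have hmap : LinearMap.ker (e.conj (N ^ t)) = (LinearMap.ker (N ^ t)).map (e : V →ₗ[k] W) := by
    rw [Submodule.map_equiv_eq_comap_symm]
    ext x
    simp [LinearEquiv.conj_apply]
  rw [hpow, hmap, e.finrank_map_eq, hker]

end HasJordanType

end JordanType

section JordanBlock

variable (R : Type*) [Semiring R] (p : ℕ)

/-- The nilpotent Jordan block of size `p`, acting on coordinate vectors as the shift
`(x₀, …, xₚ₋₁) ↦ (x₁, …, xₚ₋₁, 0)`. -/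
def jordanBlock : Module.End R (Fin p → R) where
  toFun x i := if h : i + 1 < p then x ⟨i + 1, h⟩ else 0
  map_add' x y := by ext i; simp only [Pi.add_apply]; split_ifs <;> simp
  map_smul' c x := by ext i; simp only [Pi.smul_apply]; split_ifs <;> simp

theorem jordanBlock_apply (x : Fin p → R) (i : Fin p) :
    jordanBlock R p x i = if h : i + 1 < p then x ⟨i + 1, h⟩ else 0 := rfl

theorem jordanBlock_pow_apply (t : ℕ) (x : Fin p → R) (i : Fin p) :
    (jordanBlock R p ^ t) x i = if h : i + t < p then x ⟨i + t, h⟩ else 0 := by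
  induction t generalizing i with
  | zero => simp
  | succ t ih =>
    rw [pow_succ', Module.End.mul_apply, jordanBlock_apply]
    grind

theorem ker_jordanBlock_pow (t : ℕ) :
    LinearMap.ker (jordanBlock R p ^ t) = Pi.spanSubset R {i : Fin p | (i : ℕ) < t} := by
  ext x
  rw [LinearMap.mem_ker, Pi.mem_spanSubset_iff]
  simp only [funext_iff, jordanBlock_pow_apply, Set.mem_ofPred_eq, not_lt, Pi.zero_apply]
  constructor
  · intro hx i hi
    simpa [Nat.sub_add_cancel hi] using hx ⟨i - t, by omega⟩
  · intro hx i
    split_ifs with h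
    · exact hx _ (Nat.le_add_left t i)
    · rfl

end JordanBlock

theorem hasJordanType_jordanBlock (k : Type*) [Field k] (p : ℕ) :
    HasJordanType (jordanBlock k p) {p} := by
  refine ⟨⟨p, ?_⟩, fun t => ?_⟩
  · ext x i
    simp [jordanBlock_pow_apply]
  · have hcard : {i : Fin p | (i : ℕ) < t}.ncard = min t p := by
      rw [Set.ncard_eq_toFinset_card', Set.toFinset_ofPred, Fin.card_filter_val_lt, min_comm]
    rw [ker_jordanBlock_pow, Pi.dim_spanSubset, hcard, Multiset.map_singleton,
      Multiset.sum_singleton]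

section AlternatingSignForm

variable (R : Type*) [CommRing R] (p : ℕ)

/-- The bilinear form `⟨x, y⟩ = ∑ i, (-1) ^ i * x i * y (p - 1 - i)` on `R ^ p`, for which the
Jordan block is skew-adjoint. -/
def alternatingSignForm : LinearMap.BilinForm R (Fin p → R) :=
  ∑ i : Fin p, (-1 : R) ^ (i : ℕ) •
    (LinearMap.mul R R).compl₁₂ (LinearMap.proj i) (LinearMap.proj i.rev)

theorem alternatingSignForm_apply (x y : Fin p → R) :
    alternatingSignForm R p x y = ∑ i : Fin p, (-1) ^ (i : ℕ) * (x i * y i.rev) := by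
  simp [alternatingSignForm]

theorem separatingLeft_alternatingSignForm : (alternatingSignForm R p).SeparatingLeft := by
  intro x hx
  ext i
  simpa [alternatingSignForm_apply, Pi.single_apply, Fin.rev_inj] using hx (Pi.single i.rev 1)

variable {p} in
theorem isSymm_alternatingSignForm (hp : Odd p) : (alternatingSignForm R p).IsSymm := by
  have hsign (i : Fin p) : (-1 : R) ^ (i.rev : ℕ) = (-1) ^ (i : ℕ) := by
    apply neg_one_pow_congr
    grind
  refine ⟨fun x y => ?_⟩
  rw [alternatingSignForm_apply, alternatingSignForm_apply, ← Equiv.sum_comp Fin.revPerm]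
  simp only [Fin.revPerm_apply, hsign, Fin.rev_rev, mul_comm]

theorem isSkewAdjoint_jordanBlock : (alternatingSignForm R p).IsSkewAdjoint (jordanBlock R p) := by
  cases p with
  | zero => exact fun x y => by simp [alternatingSignForm_apply]
  | succ m =>
    have hlast (x : Fin (m + 1) → R) : jordanBlock R (m + 1) x (Fin.last m) = 0 := by
      simp [jordanBlock_apply]
    have hcast (x : Fin (m + 1) → R) (i : Fin m) :
        jordanBlock R (m + 1) x i.castSucc = x i.succ := by
      simp [jordanBlock_apply, Fin.succ]
    intro x y
    rw [alternatingSignForm_apply, alternatingSignForm_apply, Fin.sum_univ_castSucc,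
      Fin.sum_univ_succ]
    simp [hlast, hcast, Fin.rev_succ, Fin.rev_castSucc, pow_succ]

end AlternatingSignForm

section Orthogonal

universe u

/-- `IsOrthogonalJordanType k s` says that `s` is the Jordan type of a skew-adjoint nilpotent
endomorphism of some finite-dimensional space over `k` with a nondegenerate symmetric bilinear
form. The space is taken in the universe of `k`, which excludes nothing up to isomorphism. -/
def IsOrthogonalJordanType (k : Type u) [Field k] (s : Multiset ℕ) : Prop :=
  ∃ (W : Type u) (_ : AddCommGroup W) (_ : Module k W) (_ : FiniteDimensional k W)
    (B : LinearMap.BilinForm k W) (N : Module.End k W),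
    B.IsSymm ∧ B.SeparatingLeft ∧ B.IsSkewAdjoint N ∧ HasJordanType N s

variable {k : Type u} [Field k] {s s' : Multiset ℕ}

namespace IsOrthogonalJordanType

theorem zero : IsOrthogonalJordanType k 0 :=
  ⟨PUnit, inferInstance, inferInstance, inferInstance, 0, 0, ⟨fun _ _ => rfl⟩,
    fun _ _ => rfl, fun _ _ => by simp, .of_subsingleton 0⟩

theorem add (h : IsOrthogonalJordanType k s) (h' : IsOrthogonalJordanType k s') :
    IsOrthogonalJordanType k (s + s') := by
  obtain ⟨W, _, _, _, B, N, hsymm, hsep, hskew, hN⟩ := h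
  obtain ⟨W', _, _, _, B', N', hsymm', hsep', hskew', hN'⟩ := h'
  let C : LinearMap.BilinForm k (W × W') :=
    B.compl₁₂ (.fst k W W') (.fst k W W') + B'.compl₁₂ (.snd k W W') (.snd k W W')
  have hC (x y : W × W') : C x y = B x.1 y.1 + B' x.2 y.2 := rfl
  refine ⟨W × W', inferInstance, inferInstance, inferInstance, C, N.prodMap N', ⟨fun x y => ?_⟩,
    fun x hx => Prod.ext ?_ ?_, fun x y => ?_, hN.prodMap hN'⟩
  · simp [hC, hsymm.eq x.1, hsymm'.eq x.2]
  · exact hsep _ fun y => by simpa [hC] using hx (y, 0)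
  · exact hsep' _ fun y => by simpa [hC] using hx (0, y)
  · simp [hC, hskew x.1 y.1, hskew' x.2 y.2]

theorem singleton_of_odd {p : ℕ} (hp : Odd p) : IsOrthogonalJordanType k {p} :=
  ⟨Fin p → k, inferInstance, inferInstance, inferInstance, alternatingSignForm k p,
    jordanBlock k p, isSymm_alternatingSignForm k hp, separatingLeft_alternatingSignForm k p,
    isSkewAdjoint_jordanBlock k p, hasJordanType_jordanBlock k p⟩

end IsOrthogonalJordanType

theorem HasJordanType.isOrthogonalJordanType_add_self {W : Type u} [AddCommGroup W] [Module k W]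
    [FiniteDimensional k W] {N : Module.End k W} (h : HasJordanType N s) :
    IsOrthogonalJordanType k (s + s) :=
  ⟨Module.Dual k W × W, inferInstance, inferInstance, inferInstance, LinearMap.dualProd k W,
    (-N.dualMap).prodMap N, ⟨(LinearMap.isSymm_dualProd k W).eq⟩,
    (LinearMap.separatingLeft_dualProd k W).2 (Module.eval_apply_injective k),
    fun x y => by simp, h.dualMap.neg.prodMap h⟩

namespace IsOrthogonalJordanType

theorem of_forall_odd (hs : ∀ p ∈ s, Odd p) : IsOrthogonalJordanType k s := by
  induction s using Multiset.induction_on with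
  | empty => exact zero
  | cons p s ih =>
    rw [Multiset.forall_mem_cons] at hs
    exact (singleton_of_odd hs.1).add (ih hs.2)

protected theorem two_nsmul (s : Multiset ℕ) : IsOrthogonalJordanType k (2 • s) := by
  induction s using Multiset.induction_on with
  | empty => exact zero
  | cons p s ih =>
    rw [← Multiset.singleton_add, nsmul_add, two_nsmul]
    exact (hasJordanType_jordanBlock k p).isOrthogonalJordanType_add_self.add ih

theorem of_even_count (hs : ∀ p, Even p → Even (s.count p)) : IsOrthogonalJordanType k s := by
  obtain ⟨u, hu⟩ : ∃ u, s.filter Even = 2 • u :=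
    Multiset.exists_smul_of_dvd_count _ fun p hp => by
      have hp_even : Even p := Multiset.of_mem_filter hp
      rw [Multiset.count_filter_of_pos hp_even]
      exact (hs p hp_even).two_dvd
  have hodd : ∀ p ∈ s.filter (fun p => ¬ Even p), Odd p := fun p hp =>
    Nat.not_even_iff_odd.1 (Multiset.mem_filter.1 hp).2
  rw [← Multiset.filter_add_not Even s, hu]
  exact (IsOrthogonalJordanType.two_nsmul u).add (of_forall_odd hodd)

end IsOrthogonalJordanType

end Orthogonal

theorem isSkewAdjoint_symm_conj {R M M' : Type*} [CommRing R]
    [AddCommGroup M] [Module R M] [AddCommGroup M'] [Module R M']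
    {B : LinearMap.BilinForm R M} {C : LinearMap.BilinForm R M'} {N : Module.End R M'}
    (hN : C.IsSkewAdjoint N) (e : M ≃ₗ[R] M')
    (he : ∀ x y, C (e x) (e y) = B x y) : B.IsSkewAdjoint (e.symm.conj N) := by
  intro x y
  rw [← he, ← he]
  simpa [LinearEquiv.conj_apply] using hN (e x) (e y)

theorem exists_isometry_of_isAlgClosed {k V W : Type*} [Field k] [IsAlgClosed k]
    [AddCommGroup V] [Module k V] [FiniteDimensional k V]
    [AddCommGroup W] [Module k W] [FiniteDimensional k W]
    (h2 : (2 : k) ≠ 0) (hVW : Module.finrank k V = Module.finrank k W)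
    {B : LinearMap.BilinForm k V} (hB : B.IsSymm) (hB' : B.SeparatingLeft)
    {C : LinearMap.BilinForm k W} (hC : C.IsSymm) (hC' : C.SeparatingLeft) :
    ∃ e : V ≃ₗ[k] W, ∀ x y, C (e x) (e y) = B x y := by
  let _ : Invertible (2 : k) := invertibleOfNonzero h2
  have hBa : B.toQuadraticMap.associated = B := QuadraticMap.associated_left_inverse k hB.eq
  have hCa : C.toQuadraticMap.associated = C := QuadraticMap.associated_left_inverse k hC.eq
  have hBsum := QuadraticForm.equivalent_weightedSumSquares_of_isAlgClosed B.toQuadraticMap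
    (by rwa [hBa])
  have hCsum := QuadraticForm.equivalent_weightedSumSquares_of_isAlgClosed C.toQuadraticMap
    (by rwa [hCa])
  rw [hVW] at hBsum
  obtain ⟨e⟩ := hBsum.trans hCsum.symm
  refine ⟨e.toLinearEquiv, fun x y => ?_⟩
  have hpull : C.compl₁₂ e.toLinearEquiv e.toLinearEquiv = B :=
    LinearMap.BilinForm.ext_of_isSymm ⟨fun x y => hC.eq _ _⟩ hB e.map_app
  exact LinearMap.congr_fun₂ hpull x y

/-- Every partition of `n` whose even parts have even multiplicity is the Jordan type of a
skew-adjoint nilpotent endomorphism of an `n`-dimensional quadratic space over an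
algebraically closed field of characteristic ≠ 2. -/
theorem stmt5 (k : Type*) [Field k] [IsAlgClosed k] (hchar : (2 : k) ≠ 0)
    (V : Type*) [AddCommGroup V] [Module k V] [FiniteDimensional k V]
    (n : ℕ) (hdim : Module.finrank k V = n)
    (B : V →ₗ[k] V →ₗ[k] k)
    (hBnd : ∀ x : V, (∀ y : V, B x y = 0) → x = 0)
    (hsymm : ∀ x y : V, B x y = B y x)
    (lam : Nat.Partition n)
    (hlam : ∀ j : ℕ, Even j → Even (Multiset.count j lam.parts)) :
    ∃ N : Module.End k V,
      (∀ x y : V, B (N x) y = - B x (N y)) ∧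
      IsNilpotent N ∧
      ∀ t : ℕ, Module.finrank k ↥(LinearMap.ker (N ^ t)) =
        (lam.parts.map fun p => min t p).sum := by
  obtain ⟨W, _, _, _, C, N, hsymmC, hsepC, hskew, hN⟩ :=
    IsOrthogonalJordanType.of_even_count (k := k) hlam
  have hVW : Module.finrank k V = Module.finrank k W := by
    rw [hdim, hN.finrank_eq_sum, lam.parts_sum]
  obtain ⟨e, he⟩ := exists_isometry_of_isAlgClosed hchar hVW ⟨hsymm⟩ hBnd hsymmC hsepC
  exact ⟨e.symm.conj N,
    fun x y => (isSkewAdjoint_symm_conj hskew e he x y).trans (map_neg _ _),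
    hN.conj e.symm⟩
end

section
/- Let k be an algebraically closed field with char k ≠ 2 and let V be a finite-dimensional k-vector space with a nondegenerate symmetric bilinear form ⟨·,·⟩. If N and N' are skew-adjoint nilpotent endomorphisms of V with the same Jordan type, i.e., dim ker(N^t) = dim ker(N'^t) for all t ≥ 0, then there exists a linear automorphism g of V with ⟨g x, g y⟩ = ⟨x, y⟩ for all x, y ∈ V and g ∘ N ∘ g^{−1} = N'. -/
/-!
An intertwiner of nilpotent endomorphisms with equal kernel dimensions is built from one between
their restrictions to the ranges: first extend it injectively over the kernels, then correct it
outside `ker N ∪ range N` by a lift along `N'`.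

A linear intertwiner `h` is then improved to an isometry. Pulling the second form back along `h`
gives a second form on `V`, which can be written `B (A x) y` for some invertible `A`. This `A` is
self-adjoint and commutes with `N`, because the adjoint of `N` is the same for both forms. Over a
separably closed field of characteristic not 2, `A` has a square root `C` in `k[A]`, which inherits
both properties. Hence the pulled-back form is `B (C x) (C y)`, and `h ∘ C⁻¹` is the isometry.
-/

open Module Polynomial

section LinearExtension

variable {k V V' U : Type*} [Field k] [AddCommGroup V] [Module k V] [AddCommGroup V'] [Module k V']
  [AddCommGroup U] [Module k U]

theorem finrank_ker_comp_of_surjective [FiniteDimensional k V] (g : V' →ₗ[k] U) {f : V →ₗ[k] V'}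
    (hf : Function.Surjective f) :
    finrank k (g ∘ₗ f).ker = finrank k g.ker + finrank k f.ker := by
  have : FiniteDimensional k V' := .of_surjective f hf
  have h_comp := (g ∘ₗ f).finrank_range_add_finrank_ker
  have h_left := g.finrank_range_add_finrank_ker
  have h_right := f.finrank_range_add_finrank_ker
  rw [LinearMap.range_comp_of_range_eq_top g (LinearMap.range_eq_top.2 hf)] at h_comp
  rw [LinearMap.range_eq_top.2 hf, finrank_top] at h_right
  omega

theorem exists_injective_extend [FiniteDimensional k V] [FiniteDimensional k V']
    (hVV' : finrank k V ≤ finrank k V') {p : Submodule k V} {f : p →ₗ[k] V'}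
    (hf : Function.Injective f) :
    ∃ g : V →ₗ[k] V', Function.Injective g ∧ ∀ x : p, g x = f x := by
  obtain ⟨q, hpq⟩ := p.exists_isCompl
  obtain ⟨q', hq'⟩ := f.range.exists_isCompl
  have hqq' : finrank k q ≤ finrank k q' := by
    have h := Submodule.finrank_add_eq_of_isCompl hpq
    have h' := Submodule.finrank_add_eq_of_isCompl hq'
    rw [LinearMap.finrank_range_of_inj hf] at h'
    omega
  obtain ⟨φ, hφ⟩ := finrank_le_iff_exists_linearMap.1 hqq'
  have hdisj : Disjoint f.range (q'.subtype ∘ₗ φ).range :=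
    hq'.disjoint.mono_right ((LinearMap.range_comp_le_range _ _).trans q'.range_subtype.le)
  have hinj : Function.Injective (f.coprod (q'.subtype ∘ₗ φ)) := by
    rw [← LinearMap.ker_eq_bot, LinearMap.ker_coprod_of_disjoint_range _ _ hdisj,
      LinearMap.ker_eq_bot.2 hf, LinearMap.ker_eq_bot.2 (Subtype.val_injective.comp hφ),
      Submodule.prod_bot]
  let e := Submodule.prodEquivOfIsCompl p q hpq
  refine ⟨f.coprod (q'.subtype ∘ₗ φ) ∘ₗ e.symm, hinj.comp e.symm.injective, fun x ↦ ?_⟩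
  simp [e]

theorem exists_extend_injOn {K W : Submodule k V} {K' : Submodule k V'} [FiniteDimensional k K]
    [FiniteDimensional k K'] (hKK' : finrank k K ≤ finrank k K') {f : W →ₗ[k] V'}
    (hf : Function.Injective f) (hfK : ∀ w : W, (w : V) ∈ K → f w ∈ K') :
    ∃ g : V →ₗ[k] V', (∀ w : W, g w = f w) ∧ Set.MapsTo g K K' ∧ Set.InjOn g K := by
  let ι : W.comap K.subtype →ₗ[k] W := K.subtype.restrict fun _ hx ↦ hx
  let f₀ : W.comap K.subtype →ₗ[k] K' := (f ∘ₗ ι).codRestrict K' fun x ↦ hfK (ι x) x.1.2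
  have hf₀ : Function.Injective f₀ := fun x y hxy ↦ by
    have hι : (ι x : V) = ι y := congrArg Subtype.val (hf (congrArg Subtype.val hxy))
    exact Subtype.ext (Subtype.ext hι)
  obtain ⟨e, he, hef₀⟩ := exists_injective_extend hKK' hf₀
  let F : V →ₗ.[k] V' := ⟨W, f⟩
  let E : V →ₗ.[k] V' := ⟨K, K'.subtype ∘ₗ e⟩
  have hFE : ∀ (w : F.domain) (x : E.domain), (w : V) = x → F w = E x := by
    rintro ⟨w, hw⟩ ⟨_, hx⟩ rfl
    exact (congrArg Subtype.val (hef₀ ⟨⟨w, hx⟩, hw⟩)).symm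
  obtain ⟨g, hg⟩ := (F.sup E hFE).toFun.exists_extend
  have hgF (w : W) : g w = f w :=
    (LinearMap.congr_fun hg ⟨w, le_sup_left (a := W) w.2⟩).trans
      ((F.left_le_sup E hFE).2 (x := w) rfl).symm
  have hgE (x : K) : g x = e x :=
    (LinearMap.congr_fun hg ⟨x, le_sup_right (b := K) x.2⟩).trans
      ((F.right_le_sup E hFE).2 (x := x) rfl).symm
  refine ⟨g, hgF, fun x hx ↦ hgE ⟨x, hx⟩ ▸ (e ⟨x, hx⟩).2, fun x hx y hy hxy ↦ ?_⟩
  rw [hgE ⟨x, hx⟩, hgE ⟨y, hy⟩] at hxy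
  exact congrArg Subtype.val (he (Subtype.ext hxy))

theorem exists_comp_eq_and_eqOn {p : V' →ₗ[k] U} (hp : Function.Surjective p) {φ : V →ₗ[k] U}
    {g₀ : V →ₗ[k] V'} {s : Set V} (hs : Set.EqOn (p ∘ₗ g₀) φ s) :
    ∃ g : V →ₗ[k] V', p ∘ₗ g = φ ∧ Set.EqOn g g₀ s := by
  obtain ⟨σ, hσ⟩ := p.exists_rightInverse_of_surjective (LinearMap.range_eq_top.2 hp)
  refine ⟨g₀ + σ ∘ₗ (φ - p ∘ₗ g₀), ?_, fun x hx ↦ ?_⟩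
  · rw [LinearMap.comp_add, ← LinearMap.comp_assoc, hσ, LinearMap.id_comp, add_sub_cancel]
  · simp [← hs hx]

end LinearExtension

section JordanType

variable {k V V' : Type*} [Field k] [AddCommGroup V] [Module k V] [AddCommGroup V'] [Module k V']

theorem conj_eq_iff_forall_apply_eq {e : V ≃ₗ[k] V'} {f : End k V} {f' : End k V'} :
    e.conj f = f' ↔ ∀ x, e (f x) = f' (e x) := by
  simp [LinearMap.ext_iff, e.surjective.forall]

/-- Equality of Jordan types, encoded by the dimensions of the kernels of all powers. It determines
the Jordan blocks only for eigenvalue `0`, hence everything when both endomorphisms are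
nilpotent. -/
def SameJordanType (N : End k V) (N' : End k V') : Prop :=
  ∀ t : ℕ, finrank k (N ^ t).ker = finrank k (N' ^ t).ker

/-- The endomorphism induced on the range, whose Jordan type is obtained by shortening every block
by one; it carries the induction on the nilpotency index. -/
def restrictRange (N : End k V) : End k N.range :=
  N.restrict fun x _ ↦ N.mem_range_self x

theorem coe_restrictRange_pow_apply (N : End k V) (t : ℕ) (w : N.range) :
    ((restrictRange N ^ t) w : V) = (N ^ t) w := by
  rw [restrictRange, Module.End.pow_restrict, LinearMap.restrict_apply]

theorem restrictRange_pow_eq_zero {N : End k V} {n : ℕ} (hN : N ^ (n + 1) = 0) :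
    restrictRange N ^ n = 0 := by
  ext ⟨_, x, rfl⟩
  rw [coe_restrictRange_pow_apply, ← Module.End.mul_apply, ← pow_succ, hN]
  rfl

theorem finrank_ker_pow_succ [FiniteDimensional k V] (N : End k V) (t : ℕ) :
    finrank k (N ^ (t + 1)).ker = finrank k (restrictRange N ^ t).ker + finrank k N.ker := by
  have hcomp : N ^ (t + 1) = N.range.subtype ∘ₗ (restrictRange N ^ t) ∘ₗ N.rangeRestrict := by
    ext x
    simp [coe_restrictRange_pow_apply, pow_succ]
  rw [hcomp, LinearMap.ker_comp_of_ker_eq_bot _ N.range.ker_subtype,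
    finrank_ker_comp_of_surjective _ N.surjective_rangeRestrict, N.ker_rangeRestrict]

namespace SameJordanType

variable {N : End k V} {N' : End k V'}

theorem finrank_ker_eq (h : SameJordanType N N') : finrank k N.ker = finrank k N'.ker := by
  have h1 := h 1
  rwa [pow_one, pow_one] at h1

theorem restrictRange [FiniteDimensional k V] [FiniteDimensional k V']
    (h : SameJordanType N N') : SameJordanType (restrictRange N) (restrictRange N') := fun t ↦ by
  have ht := h (t + 1)
  rwa [finrank_ker_pow_succ, finrank_ker_pow_succ, h.finrank_ker_eq, Nat.add_right_cancel_iff] at ht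

end SameJordanType

variable [FiniteDimensional k V] [FiniteDimensional k V']

theorem exists_intertwining_extend {N : End k V} {N' : End k V'}
    (hker : finrank k N.ker ≤ finrank k N'.ker) {h : N.range ≃ₗ[k] N'.range}
    (hh : h.conj (restrictRange N) = restrictRange N') :
    ∃ g : V →ₗ[k] V', (∀ x, N' (g x) = h (N.rangeRestrict x)) ∧ (∀ w : N.range, g w = h w) ∧
      Set.InjOn g N.ker := by
  have hN' (w : N.range) : N' (h w) = h (N.rangeRestrict w) :=
    congrArg Subtype.val ((conj_eq_iff_forall_apply_eq.1 hh w).symm)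
  have hmem_ker (w : N.range) (hw : (w : V) ∈ N.ker) : (h w : V') ∈ N'.ker := by
    have hNw : N.rangeRestrict w = 0 := Subtype.ext hw
    rw [LinearMap.mem_ker, hN', hNw, map_zero, Submodule.coe_zero]
  obtain ⟨g₀, hg₀h, hg₀ker, hg₀inj⟩ := exists_extend_injOn hker
    (f := N'.range.subtype ∘ₗ h.toLinearMap) (Subtype.val_injective.comp h.injective) hmem_ker
  have hg₀ : Set.EqOn (N'.rangeRestrict ∘ₗ g₀) (h.toLinearMap ∘ₗ N.rangeRestrict)
      (N.ker ∪ N.range) := by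
    rintro x (hx | hx) <;> apply Subtype.ext
    · have hNx : N.rangeRestrict x = 0 := Subtype.ext hx
      simpa [hNx] using hg₀ker hx
    · simpa [hg₀h ⟨x, hx⟩] using hN' ⟨x, hx⟩
  obtain ⟨g, hgN, hg⟩ := exists_comp_eq_and_eqOn N'.surjective_rangeRestrict hg₀
  exact ⟨g, fun x ↦ congrArg Subtype.val (LinearMap.congr_fun hgN x),
    fun w ↦ (hg (Or.inr w.2)).trans (hg₀h w),
    (hg.mono Set.subset_union_left).injOn_iff.2 hg₀inj⟩

theorem exists_conj_eq_of_conj_restrictRange_eq {N : End k V} {N' : End k V'}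
    (hker : finrank k N.ker = finrank k N'.ker) {h : N.range ≃ₗ[k] N'.range}
    (hh : h.conj (restrictRange N) = restrictRange N') :
    ∃ g : V ≃ₗ[k] V', g.conj N = N' := by
  obtain ⟨g, hgN, hgh, hgker⟩ := exists_intertwining_extend hker.le hh
  have hg : Function.Injective g := by
    refine (injective_iff_map_eq_zero g).2 fun x hx ↦ ?_
    have hNx : N.rangeRestrict x = 0 :=
      h.map_eq_zero_iff.1 (Subtype.ext (by rw [← hgN, hx, map_zero, Submodule.coe_zero]))
    exact hgker (congrArg Subtype.val hNx) N.ker.zero_mem (hx.trans (map_zero g).symm)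
  have hVV' : finrank k V = finrank k V' := by
    rw [← N.finrank_range_add_finrank_ker, ← N'.finrank_range_add_finrank_ker, h.finrank_eq, hker]
  refine ⟨LinearEquiv.ofInjectiveOfFinrankEq g hg hVV', conj_eq_iff_forall_apply_eq.2 fun x ↦ ?_⟩
  exact (hgh (N.rangeRestrict x)).trans (hgN x).symm

theorem SameJordanType.exists_conj_eq {N : End k V} {N' : End k V'} (h : SameJordanType N N')
    (hN : IsNilpotent N) (hN' : IsNilpotent N') : ∃ g : V ≃ₗ[k] V', g.conj N = N' := by
  obtain ⟨m, hm⟩ := hN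
  obtain ⟨m', hm'⟩ := hN'
  have hn : N ^ (m + m') = 0 := by rw [pow_add, hm, zero_mul]
  have hn' : N' ^ (m + m') = 0 := by rw [pow_add, hm', mul_zero]
  generalize m + m' = n at hn hn'
  clear hm hm'
  induction n generalizing V V' with
  | zero =>
    have : Subsingleton V :=
      subsingleton_of_forall_eq 0 fun x ↦ by simpa using LinearMap.congr_fun hn x
    have : Subsingleton V' :=
      subsingleton_of_forall_eq 0 fun x ↦ by simpa using LinearMap.congr_fun hn' x
    exact ⟨0, Subsingleton.elim _ _⟩
  | succ n ih =>
    obtain ⟨g, hg⟩ := ih h.restrictRange (restrictRange_pow_eq_zero hn)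
      (restrictRange_pow_eq_zero hn')
    exact exists_conj_eq_of_conj_restrictRange_eq h.finrank_ker_eq hg

end JordanType

section SquareRoot

theorem isSquare_of_isNilpotent_sq_sub {R : Type*} [CommRing R] (h2 : IsUnit (2 : R)) {a y : R}
    (ha : IsUnit a) (hy : IsNilpotent (y ^ 2 - a)) : IsSquare a := by
  have hy_unit : IsUnit y := by
    have := hy.isUnit_add_left_of_commute ha (Commute.all _ _)
    rwa [add_sub_cancel, isUnit_pow_iff two_ne_zero] at this
  obtain ⟨z, ⟨-, hz⟩, -⟩ := existsUnique_nilpotent_sub_and_aeval_eq_zero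
    (P := X ^ 2 - C a) (x := y) (by simpa using hy)
    (by simpa [one_add_one_eq_two] using h2.mul hy_unit)
  exact ⟨z, by simpa [sub_eq_zero, eq_comm, sq] using hz⟩

theorem isSquare_of_forall_isSquare_quotient {R : Type*} [CommRing R] [IsArtinianRing R]
    (h2 : IsUnit (2 : R)) {a : R} (ha : IsUnit a)
    (hsq : ∀ I : MaximalSpectrum R, IsSquare (Ideal.Quotient.mk I.asIdeal a)) : IsSquare a := by
  choose z hz using hsq
  have hcoprime : Pairwise (Function.onFun IsCoprime (MaximalSpectrum.asIdeal (R := R))) :=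
    fun I J hIJ ↦ Ideal.isCoprime_of_isMaximal fun h ↦ hIJ (MaximalSpectrum.ext h)
  obtain ⟨y, hy⟩ := Ideal.pi_quotient_surjective hcoprime z
  refine isSquare_of_isNilpotent_sq_sub h2 ha (y := y) ?_
  rw [← mem_nilradical, nilradical_eq_sInf, Submodule.mem_sInf]
  intro (I : Ideal R) (hI : I.IsPrime)
  have hmax : I.IsMaximal := (IsArtinianRing.isPrime_iff_isMaximal I).1 hI
  rw [← Ideal.Quotient.eq, map_pow, hz ⟨I, hmax⟩, ← hy, sq]

variable {k : Type*} [Field k] [IsSepClosed k] (h2 : (2 : k) ≠ 0)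
include h2

theorem isSquare_of_isSepClosed {R : Type*} [CommRing R] [Algebra k R] [FiniteDimensional k R]
    {a : R} (ha : IsUnit a) : IsSquare a := by
  have : IsArtinianRing R := IsArtinianRing.of_finite k R
  have h2R : IsUnit (2 : R) := by
    rw [← map_ofNat (algebraMap k R) 2]
    exact h2.isUnit.map _
  refine isSquare_of_forall_isSquare_quotient h2R ha fun I ↦ ?_
  let := Ideal.Quotient.field I.asIdeal
  have : IsSepClosed (R ⧸ I.asIdeal) := Algebra.IsAlgebraic.isSepClosed (F := k)
  have : NeZero (2 : R ⧸ I.asIdeal) := ⟨by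
    simpa only [map_ofNat] using (h2R.map (Ideal.Quotient.mk I.asIdeal)).ne_zero⟩
  exact IsSepClosed.exists_eq_mul_self _

theorem exists_mem_adjoin_mul_self_eq {S : Type*} [Ring S] [Algebra k S] [FiniteDimensional k S]
    {a : S} (ha : IsUnit a) : ∃ c ∈ Algebra.adjoin k {a}, c * c = a := by
  let b : Algebra.adjoin k {a} := ⟨a, Algebra.self_mem_adjoin_singleton k a⟩
  have : IsArtinianRing (Algebra.adjoin k {a}) := IsArtinianRing.of_finite k _
  have hb : IsUnit b := IsArtinianRing.isUnit_of_mem_nonZeroDivisors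
    (comap_nonZeroDivisors_le_of_injective (f := (Algebra.adjoin k {a}).subtype)
      Subtype.val_injective ha.mem_nonZeroDivisors)
  obtain ⟨c, hc⟩ := isSquare_of_isSepClosed h2 hb
  exact ⟨c, c.2, congrArg Subtype.val hc.symm⟩

end SquareRoot

section Forms

theorem isSelfAdjoint_of_mem_adjoin {R M P : Type*} [CommRing R] [AddCommGroup M] [Module R M]
    [AddCommGroup P] [Module R P] {B : M →ₗ[R] M →ₗ[R] P} {A C : End R M}
    (hA : B.IsSelfAdjoint A) (hC : C ∈ Algebra.adjoin R {A}) : B.IsSelfAdjoint C := by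
  induction hC using Algebra.adjoin_induction with
  | mem x hx => rwa [Set.mem_singleton_iff.1 hx]
  | algebraMap r => intro x y; simp [Module.algebraMap_end_apply]
  | add u v _ _ hu hv => exact hu.add hv
  | mul u v hu hv ihu ihv =>
    have huv : Commute v u := Algebra.commute_of_mem_adjoin_singleton_of_commute hu
      (Algebra.commute_of_mem_adjoin_self hv).symm
    intro x y
    rw [ihu.mul ihv x y, huv]

variable {k V V' : Type*} [Field k] [AddCommGroup V] [Module k V] [FiniteDimensional k V]
  [AddCommGroup V'] [Module k V']

theorem exists_isUnit_forall_apply_apply_eq {B₁ B₂ : LinearMap.BilinForm k V}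
    (h₁ : B₁.SeparatingLeft) (h₂ : B₂.SeparatingLeft) :
    ∃ A : End k V, IsUnit A ∧ ∀ x y, B₁ (A x) y = B₂ x y := by
  let A := B₂.symmCompOfNondegenerate B₁ (.ofSeparatingLeft h₁)
  have hA (x y : V) : B₁ (A x) y = B₂ x y := B₂.symmCompOfNondegenerate_left_apply _ y x
  refine ⟨A, (LinearMap.isUnit_iff_ker_eq_bot A).2 (LinearMap.ker_eq_bot'.2 fun x hx ↦ ?_), hA⟩
  exact h₂ x fun y ↦ by rw [← hA, hx, map_zero, LinearMap.zero_apply]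

theorem exists_conj_eq_forall_apply_apply_eq [IsSepClosed k] (h2 : (2 : k) ≠ 0)
    {B₁ B₂ : LinearMap.BilinForm k V} (h₁ : B₁.SeparatingLeft) (h₂ : B₂.SeparatingLeft) {ε : k}
    (hε₁ : ∀ x y, B₁ x y = ε * B₁ y x) (hε₂ : ∀ x y, B₂ x y = ε * B₂ y x) {N M : End k V}
    (hNM₁ : B₁.IsAdjointPair B₁ N M) (hNM₂ : B₂.IsAdjointPair B₂ N M) :
    ∃ e : V ≃ₗ[k] V, e.conj N = N ∧ ∀ x y, B₁ (e x) (e y) = B₂ x y := by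
  obtain ⟨A, hA, hAB⟩ := exists_isUnit_forall_apply_apply_eq h₁ h₂
  have hAN : Commute N A := by
    refine LinearMap.ext fun x ↦ ?_
    refine LinearMap.ker_eq_bot.1 (LinearMap.separatingLeft_iff_ker_eq_bot.1 h₁)
      (LinearMap.ext fun y ↦ ?_)
    simp only [Module.End.mul_apply]
    rw [hNM₁, hAB, hAB, hNM₂]
  have hA_adj : B₁.IsSelfAdjoint A := fun x y ↦ by rw [hAB, hε₂, ← hAB, ← hε₁]
  obtain ⟨C, hC_mem, hC⟩ := exists_mem_adjoin_mul_self_eq h2 hA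
  have hC_adj := isSelfAdjoint_of_mem_adjoin hA_adj hC_mem
  have hCN : Commute N C := Algebra.commute_of_mem_adjoin_singleton_of_commute hC_mem hAN
  have hC_unit : IsUnit C := isUnit_of_mul_isUnit_left (hC ▸ hA)
  refine ⟨.ofBijective C ((Module.End.isUnit_iff C).1 hC_unit),
    conj_eq_iff_forall_apply_eq.2 fun x ↦ (LinearMap.congr_fun hCN x).symm, fun x y ↦ ?_⟩
  calc B₁ (C x) (C y) = B₁ ((C * C) x) y := (hC_adj (C x) y).symm
    _ = B₂ x y := by rw [hC, hAB]

theorem exists_isometry_conj_eq [IsSepClosed k] (h2 : (2 : k) ≠ 0)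
    {B : LinearMap.BilinForm k V} {B' : LinearMap.BilinForm k V'}
    (hB : B.SeparatingLeft) (hB' : B'.SeparatingLeft) {ε : k}
    (hε : ∀ x y, B x y = ε * B y x) (hε' : ∀ x y, B' x y = ε * B' y x)
    {N M : End k V} {N' M' : End k V'}
    (hNM : B.IsAdjointPair B N M) (hNM' : B'.IsAdjointPair B' N' M')
    {h : V ≃ₗ[k] V'} (hN : h.conj N = N') (hM : h.conj M = M') :
    ∃ g : V ≃ₗ[k] V', (∀ x y, B' (g x) (g y) = B x y) ∧ g.conj N = N' := by
  rw [conj_eq_iff_forall_apply_eq] at hN hM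
  let B₂ : LinearMap.BilinForm k V := B'.compl₁₂ h.toLinearMap h.toLinearMap
  have hB₂ : B₂.SeparatingLeft := fun x hx ↦
    h.map_eq_zero_iff.1 (hB' (h x) (h.surjective.forall.2 hx))
  have hNM₂ : B₂.IsAdjointPair B₂ N M := fun x y ↦ by
    simpa [B₂, hN, hM] using hNM' (h x) (h y)
  obtain ⟨e, heN, heB⟩ := exists_conj_eq_forall_apply_apply_eq h2 hB hB₂ hε
    (fun x y ↦ hε' (h x) (h y)) hNM hNM₂
  rw [conj_eq_iff_forall_apply_eq] at heN
  refine ⟨e.symm.trans h, e.surjective.forall₂.2 fun x y ↦ ?_,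
    conj_eq_iff_forall_apply_eq.2 (e.surjective.forall.2 fun x ↦ ?_)⟩
  · simpa [B₂] using (heB x y).symm
  · simp [← heN, hN]

/-- The adjoint of `N` is `q(N)` with `q = -X` for skew-adjoint `N`, with `q = X` for self-adjoint
`N`, and with `q = ∑ i ≥ 1, (-X) ^ i`, truncated at the nilpotency index, for `N = u - 1` where
`u` is a unipotent isometry. -/
theorem stmt7_general [FiniteDimensional k V'] [IsSepClosed k] (h2 : (2 : k) ≠ 0)
    {B : LinearMap.BilinForm k V} {B' : LinearMap.BilinForm k V'}
    (hB : B.SeparatingLeft) (hB' : B'.SeparatingLeft) {ε : k}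
    (hε : ∀ x y, B x y = ε * B y x) (hε' : ∀ x y, B' x y = ε * B' y x)
    {N : End k V} {N' : End k V'} {q : k[X]}
    (hadj : B.IsAdjointPair B N (aeval N q)) (hadj' : B'.IsAdjointPair B' N' (aeval N' q))
    (hN : IsNilpotent N) (hN' : IsNilpotent N') (h : SameJordanType N N') :
    ∃ g : V ≃ₗ[k] V', (∀ x y, B' (g x) (g y) = B x y) ∧ g.conj N = N' := by
  obtain ⟨g, hg⟩ := h.exists_conj_eq hN hN'
  have hgq : g.conj (aeval N q) = aeval N' q := by
    rw [← hg]
    exact (aeval_algHom_apply (g.conjAlgEquiv k) N q).symm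
  exact exists_isometry_conj_eq h2 hB hB' hε hε' hadj hadj' hg hgq

end Forms

/-- Two skew-adjoint nilpotent endomorphisms of a quadratic space over an algebraically
closed field of characteristic ≠ 2 with the same Jordan type are conjugate by an element
of the full orthogonal group. -/
theorem stmt7 (k : Type*) [Field k] [IsAlgClosed k] (hchar : (2 : k) ≠ 0)
    (V : Type*) [AddCommGroup V] [Module k V] [FiniteDimensional k V]
    (B : V →ₗ[k] V →ₗ[k] k)
    (hBnd : ∀ x : V, (∀ y : V, B x y = 0) → x = 0)
    (hsymm : ∀ x y : V, B x y = B y x)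
    (N N' : Module.End k V)
    (hskew : ∀ x y : V, B (N x) y = - B x (N y))
    (hskew' : ∀ x y : V, B (N' x) y = - B x (N' y))
    (hnil : IsNilpotent N) (hnil' : IsNilpotent N')
    (hjt : ∀ t : ℕ, Module.finrank k ↥(LinearMap.ker (N ^ t)) =
      Module.finrank k ↥(LinearMap.ker (N' ^ t))) :
    ∃ g : V ≃ₗ[k] V,
      (∀ x y : V, B (g x) (g y) = B x y) ∧
      (∀ w : V, g (N (g.symm w)) = N' w) := by
  obtain ⟨g, hgB, hgN⟩ := stmt7_general hchar (ε := 1) (q := -X) hBnd hBnd (by simpa using hsymm)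
    (by simpa using hsymm) (fun x y ↦ by simp [hskew]) (fun x y ↦ by simp [hskew']) hnil hnil' hjt
  exact ⟨g, hgB, LinearMap.congr_fun hgN⟩
end
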